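/- Let Ω ⊂ ℂⁿ be a bounded domain, m > 1, and let F : Ω × ℂⁿ → [0,∞) be Borel-measurable. Assume there are constants c > 0 and A > 0 such that: (i) F(z,X) ≥ c|X|/δ_Ω(z)^{1/m} for all z ∈ Ω, X ∈ ℂⁿ; (ii) every piecewise C¹ curve σ : [0,1] → Ω satisfies F-length(σ) ≥ (1/2)|log(δ_Ω(σ(0))/δ_Ω(σ(1)))|; (iii) d_F(x,y) ≤ log(1 + A|x−y|/√(δ_Ω(x)δ_Ω(y))) for all x, y ∈ Ω. Then there exists C > 0 such that every piecewise C¹ curve γ from x to y with F-length(γ) = d_F(x,y) (an F-geodesic) satisfies L(γ) ≤ C·|x−y|^{1/m}. -/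

import Mathlib

open Set Metric MeasureTheory Filter Bornology

noncomputable section


/-- Equip `ℂⁿ` with its Borel σ-algebra, so that `Measurable` means Borel measurable. -/
instance {n : ℕ} : MeasurableSpace (EuclideanSpace ℂ (Fin n)) := borel _

instance {n : ℕ} : BorelSpace (EuclideanSpace ℂ (Fin n)) := ⟨rfl⟩

/-- The Euclidean distance from a point to the boundary of `Ω`. -/
def bdist {n : ℕ} (Ω : Set (EuclideanSpace ℂ (Fin n))) (z : EuclideanSpace ℂ (Fin n)) : ℝ :=
  Metric.infDist z (frontier Ω)

/-- A curve `γ : [a,b] → ℂⁿ` is piecewise `C¹` if it is continuous and there is a finite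
partition of `[a,b]` on each closed subinterval of which `γ` is `C¹`. -/
def PiecewiseC1On {n : ℕ} (γ : ℝ → EuclideanSpace ℂ (Fin n)) (a b : ℝ) : Prop :=
  ContinuousOn γ (Set.Icc a b) ∧
  ∃ (k : ℕ) (t : Fin (k + 1) → ℝ), StrictMono t ∧ t 0 = a ∧ t (Fin.last k) = b ∧
    ∀ i : Fin k, ContDiffOn ℝ 1 γ (Set.Icc (t i.castSucc) (t i.succ))

/-- The `F`-length `∫_a^b F(γ(t), γ'(t)) dt` of a curve. -/
def Flength {n : ℕ} (F : EuclideanSpace ℂ (Fin n) → EuclideanSpace ℂ (Fin n) → ℝ)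
    (γ : ℝ → EuclideanSpace ℂ (Fin n)) (a b : ℝ) : ℝ :=
  ∫ t in a..b, F (γ t) (deriv γ t)

/-- The Euclidean length `∫_a^b |γ'(t)| dt` of a curve. -/
def eLength {n : ℕ} (γ : ℝ → EuclideanSpace ℂ (Fin n)) (a b : ℝ) : ℝ :=
  ∫ t in a..b, ‖deriv γ t‖

/-- `γ` is a piecewise `C¹` curve in `Ω` from `x` to `y`, parametrized on `[0,1]`. -/
def IsCurveIn {n : ℕ} (Ω : Set (EuclideanSpace ℂ (Fin n))) (x y : EuclideanSpace ℂ (Fin n))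
    (γ : ℝ → EuclideanSpace ℂ (Fin n)) : Prop :=
  PiecewiseC1On γ 0 1 ∧ (∀ t ∈ Set.Icc (0 : ℝ) 1, γ t ∈ Ω) ∧ γ 0 = x ∧ γ 1 = y

/-- The pseudodistance associated to the Finsler-type integrand `F`. -/
def dF {n : ℕ} (Ω : Set (EuclideanSpace ℂ (Fin n)))
    (F : EuclideanSpace ℂ (Fin n) → EuclideanSpace ℂ (Fin n) → ℝ)
    (x y : EuclideanSpace ℂ (Fin n)) : ℝ :=
  sInf {L | ∃ γ, IsCurveIn Ω x y γ ∧ L = Flength F γ 0 1}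

/-!
Write `ℓ` for the `F`-length of a geodesic `γ` from `x` to `y`, `G` for the geometric mean of
`δ_Ω(x)` and `δ_Ω(y)`, and `k = 1 / m`. By (ii), `δ_Ω` grows along `γ` at most like the exponential
of twice the `F`-length measured from either endpoint. So `δ_Ω ^ k` lies along `γ` below two
exponentials of the `F`-length with constant product `(G * exp ℓ) ^ (2 * k)`, hence below their
harmonic mean, whose primitive is an arctangent. By (i), the Euclidean length of `γ` is at most
`1 / c` times the integral of `δ_Ω ^ k` with respect to the `F`-length, and this integral is
therefore at most `(G * exp ℓ) ^ k * min (π / (2 * k)) ℓ`. Finally `ℓ ≤ log (1 + A * |x - y| / G)`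
by (iii); use the first term of the minimum if `G ≤ |x - y|`, and the second one otherwise.

Since `F` is not assumed homogeneous, (ii) does not pass to subarcs by reparametrization. Instead,
a subarc is prolonged to an arc over a unit interval by a curve of small `F`-length, which exists
because `d_F(z, z) ≤ 0` by (iii) and which stays close to its starting point by (i).
-/

section Calculus

theorem absolutelyContinuousOnInterval_comp_of_lipschitzWith {X Y : Type*} [PseudoMetricSpace X]
    [PseudoMetricSpace Y] {g : X → Y} {f : ℝ → X} {K : NNReal} {a b : ℝ} (hg : LipschitzWith K g)
    (hf : AbsolutelyContinuousOnInterval f a b) : AbsolutelyContinuousOnInterval (g ∘ f) a b := by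
  have hKf := Filter.Tendsto.const_mul (K : ℝ) hf
  rw [mul_zero] at hKf
  refine squeeze_zero (fun _ => Finset.sum_nonneg fun _ _ => dist_nonneg) (fun P => ?_) hKf
  rw [Finset.mul_sum]
  exact Finset.sum_le_sum fun i _ => hg.dist_le_mul _ _

variable {φ d : ℝ → ℝ} {a b k p q : ℝ}

theorem integral_mul_comp_primitive {g g' : ℝ → ℝ} {K : NNReal}
    (hg : ∀ v, HasDerivAt g (g' v) v) (hK : LipschitzWith K g)
    (hφ : IntervalIntegrable φ volume a b) :
    ∫ t in a..b, φ t * g' (∫ u in a..t, φ u) = g (∫ u in a..b, φ u) - g 0 := by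
  have hac := absolutelyContinuousOnInterval_comp_of_lipschitzWith hK
    (hφ.absolutelyContinuousOnInterval_intervalIntegral (c := a) left_mem_uIcc)
  calc ∫ t in a..b, φ t * g' (∫ u in a..t, φ u)
      = ∫ t in a..b, deriv (g ∘ fun t => ∫ u in a..t, φ u) t := by
        refine intervalIntegral.integral_congr_ae ?_
        filter_upwards [hφ.ae_hasDerivAt_integral] with t ht htab
        rw [((hg _).comp t (ht (uIoc_subset_uIcc htab) a left_mem_uIcc)).deriv, mul_comm]
    _ = g (∫ u in a..b, φ u) - g 0 := by
        rw [hac.integral_deriv_eq_sub]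
        simp only [Function.comp_apply, intervalIntegral.integral_same]

theorem two_mul_div_one_add_sq_le_one (r : ℝ) : 2 * r / (1 + r ^ 2) ≤ 1 := by
  rw [div_le_one (by positivity)]
  linarith [two_mul_le_add_sq 1 r]

/-- `v ↦ arctan (ρ * exp (κ * v))` is a bounded antiderivative, up to the factor `κ / 2`. -/
theorem integral_mul_two_mul_div_one_add_sq_le {κ ρ : ℝ} (hκ : 0 < κ) (hρ : 0 < ρ)
    (hφ : IntervalIntegrable φ volume a b) :
    ∫ t in a..b, φ t * (2 * (ρ * Real.exp (κ * ∫ u in a..t, φ u)) /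
      (1 + (ρ * Real.exp (κ * ∫ u in a..t, φ u)) ^ 2)) ≤ Real.pi / κ := by
  set r : ℝ → ℝ := fun v => ρ * Real.exp (κ * v) with hr
  set g : ℝ → ℝ := fun v => 2 / κ * Real.arctan (r v)
  have hr0 (v : ℝ) : 0 < r v := by positivity
  have hderiv (v : ℝ) : HasDerivAt g (2 * r v / (1 + r v ^ 2)) v := by
    have hrv : HasDerivAt r (κ * r v) v :=
      ((hasDerivAt_const_mul κ).exp.const_mul ρ).congr_deriv (by simp only [hr]; ring)
    exact (hrv.arctan.const_mul (2 / κ)).congr_deriv (by field_simp)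
  have hlip : LipschitzWith 1 g := by
    refine lipschitzWith_of_nnnorm_deriv_le (fun v => (hderiv v).differentiableAt) fun v => ?_
    have := hr0 v
    rw [(hderiv v).deriv, ← NNReal.coe_le_coe, coe_nnnorm, NNReal.coe_one,
      Real.norm_of_nonneg (by positivity)]
    exact two_mul_div_one_add_sq_le_one _
  have hbound : g (∫ u in a..b, φ u) - g 0 ≤ 2 / κ * (Real.pi / 2) - 0 := by
    have hpos : 0 ≤ g 0 := mul_nonneg (by positivity) (Real.arctan_nonneg.2 (hr0 0).le)
    gcongr
    exact mul_le_mul_of_nonneg_left (Real.arctan_lt_pi_div_two _).le (by positivity)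
  calc _ = g (∫ u in a..b, φ u) - g 0 := integral_mul_comp_primitive hderiv hlip hφ
    _ ≤ 2 / κ * (Real.pi / 2) - 0 := hbound
    _ = Real.pi / κ := by ring

/-- The right-hand side is the harmonic mean `2yz / (y + z)`, written in terms of the ratio of `y`
to the geometric mean `M`. -/
theorem le_mul_two_mul_div_one_add_sq {x y z M : ℝ} (hy : 0 < y) (hz : 0 < z) (hM : 0 < M)
    (hyz : y * z = M ^ 2) (hxy : x ≤ y) (hxz : x ≤ z) :
    x ≤ M * (2 * (y / M) / (1 + (y / M) ^ 2)) := by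
  calc x ≤ 2 * (y * z) / (y + z) := by
        rw [le_div_iff₀ (by positivity)]
        nlinarith
    _ = M * (2 * (y / M) / (1 + (y / M) ^ 2)) := by
        have hz' : z = M ^ 2 / y := by rw [← hyz]; field_simp
        rw [hz']
        field_simp
        ring

theorem rpow_le_of_le_mul_exp {δ u w : ℝ} (hδ : 0 ≤ δ) (hp : 0 < p) (hq : 0 < q) (hk : 0 ≤ k)
    (hδp : δ ≤ p * Real.exp (2 * u)) (hδq : δ ≤ q * Real.exp (2 * w)) {M : ℝ}
    (hM : M = (√(p * q) * Real.exp (u + w)) ^ k) :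
    δ ^ k ≤ M * (2 * (p ^ k / M * Real.exp (2 * k * u)) /
      (1 + (p ^ k / M * Real.exp (2 * k * u)) ^ 2)) := by
  have hM0 : 0 < M := by rw [hM]; positivity
  have hmean : (p * Real.exp (2 * u)) ^ k * (q * Real.exp (2 * w)) ^ k = M ^ 2 := by
    rw [hM, ← Real.mul_rpow (by positivity) (by positivity), Real.rpow_pow_comm (by positivity),
      mul_pow, Real.sq_sqrt (by positivity), ← Real.exp_nat_mul]
    congr 1
    rw [mul_mul_mul_comm, ← Real.exp_add]
    push_cast
    ring_nf
  have hratio : p ^ k / M * Real.exp (2 * k * u) = (p * Real.exp (2 * u)) ^ k / M := by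
    rw [Real.mul_rpow hp.le (Real.exp_pos _).le, ← Real.exp_mul]
    ring_nf
  rw [hratio]
  exact le_mul_two_mul_div_one_add_sq (by positivity) (by positivity) hM0 hmean
    (Real.rpow_le_rpow hδ hδp hk) (Real.rpow_le_rpow hδ hδq hk)

theorem integral_rpow_mul_le_of_le_exp (hab : a ≤ b) (hp : 0 < p) (hq : 0 < q) (hk : 0 < k)
    (hφ : IntervalIntegrable φ volume a b) (hφ0 : ∀ t ∈ Icc a b, 0 ≤ φ t)
    (hd : ContinuousOn d (Icc a b)) (hd0 : ∀ t ∈ Icc a b, 0 ≤ d t)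
    (hdp : ∀ t ∈ Icc a b, d t ≤ p * Real.exp (2 * ∫ u in a..t, φ u))
    (hdq : ∀ t ∈ Icc a b, d t ≤ q * Real.exp (2 * ∫ u in t..b, φ u)) :
    ∫ t in a..b, d t ^ k * φ t ≤
      (√(p * q) * Real.exp (∫ t in a..b, φ t)) ^ k *
        min (Real.pi / (2 * k)) (∫ t in a..b, φ t) := by
  set ℓ := ∫ t in a..b, φ t with hℓ
  set M := (√(p * q) * Real.exp ℓ) ^ k with hM
  set r : ℝ → ℝ := fun t => p ^ k / M * Real.exp (2 * k * ∫ u in a..t, φ u) with hr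
  have hM0 : 0 < M := by positivity
  rw [← uIcc_of_le hab] at hd
  have hrc : ContinuousOn r (uIcc a b) := by
    have := intervalIntegral.continuousOn_primitive_interval' hφ left_mem_uIcc
    fun_prop
  have hφr : IntervalIntegrable (fun t => φ t * (2 * r t / (1 + r t ^ 2))) volume a b :=
    hφ.mul_continuousOn (ContinuousOn.div (by fun_prop) (by fun_prop) fun t _ => by positivity)
  have hdk (t : ℝ) (ht : t ∈ Icc a b) : d t ^ k ≤ M * (2 * r t / (1 + r t ^ 2)) := by
    refine rpow_le_of_le_mul_exp (hd0 t ht) hp hq hk.le (hdp t ht) (hdq t ht) ?_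
    rw [← uIcc_of_le hab] at ht
    rw [intervalIntegral.integral_add_adjacent_intervals
      (hφ.mono_set (uIcc_subset_uIcc_left ht)) (hφ.mono_set (uIcc_subset_uIcc_right ht))]
  calc ∫ t in a..b, d t ^ k * φ t ≤ ∫ t in a..b, M * (φ t * (2 * r t / (1 + r t ^ 2))) := by
        refine intervalIntegral.integral_mono_on hab
          (hφ.continuousOn_mul (hd.rpow_const fun _ _ => .inr hk.le)) (hφr.const_mul M)
          fun t ht => ?_
        nlinarith [mul_le_mul_of_nonneg_right (hdk t ht) (hφ0 t ht)]
    _ = M * ∫ t in a..b, φ t * (2 * r t / (1 + r t ^ 2)) := intervalIntegral.integral_const_mul _ _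
    _ ≤ M * min (Real.pi / (2 * k)) ℓ := by
        gcongr
        refine le_min (integral_mul_two_mul_div_one_add_sq_le (by positivity) (by positivity) hφ) ?_
        exact intervalIntegral.integral_mono_on hab hφr hφ fun t ht =>
          mul_le_of_le_one_right (hφ0 t ht) (two_mul_div_one_add_sq_le_one _)

theorem rpow_mul_min_le {G D A B ℓ : ℝ} (hG : 0 < G) (hD : 0 ≤ D) (hA : 0 ≤ A) (hk : 0 ≤ k)
    (hk1 : k ≤ 1) (hℓ : ℓ ≤ Real.log (1 + A * D / G)) :
    (G * Real.exp ℓ) ^ k * min B ℓ ≤ (1 + A) ^ k * max A B * D ^ k := by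
  have hpos : 0 < 1 + A * D / G := by positivity
  have hexp : G * Real.exp ℓ ≤ G + A * D := by
    calc G * Real.exp ℓ ≤ G * (1 + A * D / G) := by
          gcongr
          exact (Real.le_log_iff_exp_le hpos).1 hℓ
      _ = G + A * D := by field_simp
  rcases le_total G D with hGD | hDG
  · have hmin : min B ℓ ≤ max A B := (min_le_left _ _).trans (le_max_right _ _)
    calc (G * Real.exp ℓ) ^ k * min B ℓ ≤ (G * Real.exp ℓ) ^ k * max A B := by gcongr
      _ ≤ ((1 + A) * D) ^ k * max A B := by
          have : G * Real.exp ℓ ≤ (1 + A) * D := by linarith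
          gcongr
      _ = (1 + A) ^ k * max A B * D ^ k := by rw [Real.mul_rpow (by positivity) hD]; ring
  · have hD_div : D / G ≤ (D / G) ^ k :=
      Real.self_le_rpow_of_le_one (by positivity) ((div_le_one hG).2 hDG) hk1
    have hmin : min B ℓ ≤ A * (D / G) ^ k := by
      calc min B ℓ ≤ Real.log (1 + A * D / G) := (min_le_right _ _).trans hℓ
        _ ≤ A * (D / G) := by rw [← mul_div_assoc]; linarith [Real.log_le_sub_one_of_pos hpos]
        _ ≤ A * (D / G) ^ k := by gcongr
    calc (G * Real.exp ℓ) ^ k * min B ℓ ≤ (G * Real.exp ℓ) ^ k * (A * (D / G) ^ k) := by gcongr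
      _ ≤ ((1 + A) * G) ^ k * (A * (D / G) ^ k) := by
          have : G * Real.exp ℓ ≤ (1 + A) * G := by nlinarith
          gcongr
      _ = (1 + A) ^ k * A * D ^ k := by
          rw [Real.mul_rpow (by positivity) hG.le, Real.div_rpow hD hG.le]
          field_simp
      _ ≤ (1 + A) ^ k * max A B * D ^ k := by
          gcongr
          exact le_max_left _ _

theorem le_mul_exp_of_abs_log_div_le {I : ℝ} (hp : 0 < p) (hq : 0 < q)
    (h : 1 / 2 * |Real.log (p / q)| ≤ I) : p ≤ q * Real.exp (2 * I) := by
  rw [← div_le_iff₀' hq, ← Real.log_le_iff_le_exp (div_pos hp hq)]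
  linarith [le_abs_self (Real.log (p / q))]

end Calculus

section Arcs

variable {E : Type*} [NormedAddCommGroup E] [NormedSpace ℝ E] {γ γ' : ℝ → E} {a b s : ℝ}

/-- `γ` is piecewise `C¹` on `[a, b]`: finitely many consecutive closed intervals of positive
length, on each of which `γ` is `C¹`, lead from `a` to `b`. Encoding the subdivision by a reflexive
transitive closure makes concatenation its transitivity, and includes the case `a = b`. -/
def IsPiecewiseC1 (γ : ℝ → E) : ℝ → ℝ → Prop :=
  Relation.ReflTransGen fun s t => s < t ∧ ContDiffOn ℝ 1 γ (Icc s t)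

namespace IsPiecewiseC1

theorem le (h : IsPiecewiseC1 γ a b) : a ≤ b := by
  induction h with
  | refl => exact le_rfl
  | tail _ hd ih => exact ih.trans hd.1.le

theorem of_contDiffOn (hab : a ≤ b) (h : ContDiffOn ℝ 1 γ (Icc a b)) : IsPiecewiseC1 γ a b := by
  rcases hab.eq_or_lt with rfl | hab
  · exact .refl
  · exact .single ⟨hab, h⟩

theorem congr (h : IsPiecewiseC1 γ a b) (he : EqOn γ' γ (Icc a b)) : IsPiecewiseC1 γ' a b := by
  induction h with
  | refl => exact .refl
  | tail h hd ih =>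
    exact .tail (ih (he.mono (Icc_subset_Icc_right hd.1.le)))
      ⟨hd.1, hd.2.congr (he.mono (Icc_subset_Icc_left (le h)))⟩

theorem left (h : IsPiecewiseC1 γ a b) (hs : s ∈ Icc a b) : IsPiecewiseC1 γ a s := by
  induction h with
  | refl => rw [Icc_self, mem_singleton_iff] at hs; exact hs ▸ .refl
  | @tail b _ h hd ih =>
    rcases le_or_gt s b with hsb | hbs
    · exact ih ⟨hs.1, hsb⟩
    · exact .tail h ⟨hbs, hd.2.mono (Icc_subset_Icc_right hs.2)⟩

theorem right (h : IsPiecewiseC1 γ a b) (hs : s ∈ Icc a b) : IsPiecewiseC1 γ s b := by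
  induction h with
  | refl => rw [Icc_self, mem_singleton_iff] at hs; exact hs ▸ .refl
  | @tail b _ _ hd ih =>
    rcases le_or_gt s b with hsb | hbs
    · exact .tail (ih ⟨hs.1, hsb⟩) hd
    · exact of_contDiffOn hs.2 (hd.2.mono (Icc_subset_Icc_left hbs.le))

theorem comp_add (h : IsPiecewiseC1 γ a b) (r : ℝ) :
    IsPiecewiseC1 (fun t => γ (t + r)) (a - r) (b - r) := by
  refine h.lift (· - r) fun s t hd => ⟨sub_lt_sub_right hd.1 r, hd.2.comp (by fun_prop) ?_⟩
  exact fun u hu => ⟨sub_le_iff_le_add.1 hu.1, le_sub_iff_add_le.1 hu.2⟩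

theorem continuousOn (h : IsPiecewiseC1 γ a b) : ContinuousOn γ (Icc a b) := by
  induction h with
  | refl => simp only [Icc_self, continuousOn_singleton]
  | tail h hd ih =>
    rw [← Icc_union_Icc_eq_Icc (le h) hd.1.le]
    exact ih.union_of_isClosed hd.2.continuousOn isClosed_Icc isClosed_Icc

theorem exists_finite_differentiableAt (h : IsPiecewiseC1 γ a b) :
    ∃ S : Set ℝ, S.Finite ∧ ∀ t ∈ Ioo a b \ S, DifferentiableAt ℝ γ t := by
  induction h with
  | refl => exact ⟨∅, finite_empty, by simp⟩
  | @tail b _ _ hd ih =>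
    obtain ⟨S, hS, hSd⟩ := ih
    refine ⟨insert b S, hS.insert b, fun t ⟨ht, htS⟩ => ?_⟩
    rw [mem_insert_iff, not_or] at htS
    rcases lt_or_gt_of_ne htS.1 with htb | hbt
    · exact hSd t ⟨⟨ht.1, htb⟩, htS.2⟩
    · exact (hd.2.differentiableOn one_ne_zero).differentiableAt (Icc_mem_nhds hbt ht.2)

theorem norm_sub_le [CompleteSpace E] (h : IsPiecewiseC1 γ a b)
    (hi : IntervalIntegrable (fun t => ‖deriv γ t‖) volume a b) :
    ‖γ b - γ a‖ ≤ ∫ t in a..b, ‖deriv γ t‖ := by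
  obtain ⟨S, hS, hSd⟩ := h.exists_finite_differentiableAt
  rw [← MeasureTheory.integral_eq_of_hasDerivAt_off_countable_of_le γ (deriv γ) h.le hS.countable
    h.continuousOn (fun t ht => (hSd t ht).hasDerivAt)
    (hi.mono_fun (aestronglyMeasurable_deriv γ _) (ae_of_all _ fun _ => (norm_norm _).ge))]
  exact intervalIntegral.norm_integral_le_integral_norm h.le

end IsPiecewiseC1

variable {Ω : Set E} {F : E → E → ℝ} {α β : ℝ → E} {z w : E}

/-- `γ` restricts to a piecewise `C¹` curve in `Ω` parametrized by `[a, b]`. -/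
structure IsArcIn (Ω : Set E) (γ : ℝ → E) (a b : ℝ) : Prop where
  isPiecewiseC1 : IsPiecewiseC1 γ a b
  mem : ∀ t ∈ Icc a b, γ t ∈ Ω

/-- The integrand of the `F`-length of `γ`. It is evaluated at the junk derivative `0` in the
finitely many corners of a piecewise `C¹` curve. -/
def finslerSpeed (F : E → E → ℝ) (γ : ℝ → E) (t : ℝ) : ℝ :=
  F (γ t) (deriv γ t)

/-- The `F`-length of `γ` on `[a, b]`, equal to the junk value `0` if the `F`-speed is not
integrable there. -/
def finslerLength (F : E → E → ℝ) (γ : ℝ → E) (a b : ℝ) : ℝ :=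
  ∫ t in a..b, finslerSpeed F γ t

theorem finslerSpeed_comp_add_right (r t : ℝ) :
    finslerSpeed F (fun u => γ (u + r)) t = finslerSpeed F γ (t + r) := by
  rw [finslerSpeed, deriv_comp_add_const, finslerSpeed]

theorem finslerLength_comp_add_right (r : ℝ) :
    finslerLength F (fun u => γ (u + r)) (a - r) (b - r) = finslerLength F γ a b := by
  simp only [finslerLength, finslerSpeed_comp_add_right,
    intervalIntegral.integral_comp_add_right (finslerSpeed F γ), sub_add_cancel]

theorem eqOn_finslerSpeed {S : Set ℝ} (h : EqOn α β S) (hS : IsOpen S) :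
    EqOn (finslerSpeed F α) (finslerSpeed F β) S := fun t ht => by
  rw [finslerSpeed, finslerSpeed, h ht, h.deriv hS ht]

theorem eqOn_finslerSpeed_piecewise_left (has : a ≤ s) :
    EqOn (finslerSpeed F ((Iic s).piecewise α β)) (finslerSpeed F α) (uIoo a s) := by
  rw [uIoo_of_le has]
  exact eqOn_finslerSpeed ((piecewise_eqOn _ _ _).mono fun t ht => ht.2.le) isOpen_Ioo

theorem eqOn_finslerSpeed_piecewise_right (hsb : s ≤ b) :
    EqOn (finslerSpeed F ((Iic s).piecewise α β)) (finslerSpeed F β) (uIoo s b) := by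
  rw [uIoo_of_le hsb]
  exact eqOn_finslerSpeed ((piecewise_eqOn_compl _ _ _).mono fun t ht => ht.1.not_ge) isOpen_Ioo

theorem intervalIntegrable_finslerSpeed_piecewise_iff (has : a ≤ s) (hsb : s ≤ b) :
    IntervalIntegrable (finslerSpeed F ((Iic s).piecewise α β)) volume a b ↔
      IntervalIntegrable (finslerSpeed F α) volume a s ∧
        IntervalIntegrable (finslerSpeed F β) volume s b := by
  have hs : s ∈ uIcc a b := mem_uIcc_of_le has hsb
  rw [← intervalIntegrable_congr_uIoo (eqOn_finslerSpeed_piecewise_left (β := β) has),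
    ← intervalIntegrable_congr_uIoo (eqOn_finslerSpeed_piecewise_right (α := α) hsb)]
  exact ⟨fun h => ⟨h.mono_set (uIcc_subset_uIcc_left hs), h.mono_set (uIcc_subset_uIcc_right hs)⟩,
    fun h => h.1.trans h.2⟩

theorem finslerLength_piecewise (has : a ≤ s) (hsb : s ≤ b)
    (h : IntervalIntegrable (finslerSpeed F ((Iic s).piecewise α β)) volume a b) :
    finslerLength F ((Iic s).piecewise α β) a b =
      finslerLength F α a s + finslerLength F β s b := by
  have hs : s ∈ uIcc a b := mem_uIcc_of_le has hsb
  rw [finslerLength, finslerLength, finslerLength,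
    ← intervalIntegral.integral_add_adjacent_intervals (h.mono_set (uIcc_subset_uIcc_left hs))
      (h.mono_set (uIcc_subset_uIcc_right hs)),
    intervalIntegral.integral_congr_uIoo (eqOn_finslerSpeed_piecewise_left has),
    intervalIntegral.integral_congr_uIoo (eqOn_finslerSpeed_piecewise_right hsb)]

theorem piecewise_Iic_apply_of_le {X : Type*} {α β : ℝ → X} {s t : ℝ} (h : α s = β s)
    (hst : s ≤ t) : (Iic s).piecewise α β t = β t := by
  rcases hst.eq_or_lt with rfl | hst
  · rw [piecewise_eq_of_mem _ _ _ self_mem_Iic, h]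
  · exact piecewise_eq_of_notMem _ _ _ hst.not_ge

namespace IsArcIn

theorem le (h : IsArcIn Ω γ a b) : a ≤ b := h.isPiecewiseC1.le

theorem left (h : IsArcIn Ω γ a b) (hs : s ∈ Icc a b) : IsArcIn Ω γ a s :=
  ⟨h.isPiecewiseC1.left hs, fun t ht => h.mem t (Icc_subset_Icc_right hs.2 ht)⟩

theorem right (h : IsArcIn Ω γ a b) (hs : s ∈ Icc a b) : IsArcIn Ω γ s b :=
  ⟨h.isPiecewiseC1.right hs, fun t ht => h.mem t (Icc_subset_Icc_left hs.1 ht)⟩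

theorem comp_add (h : IsArcIn Ω γ a b) (r : ℝ) :
    IsArcIn Ω (fun t => γ (t + r)) (a - r) (b - r) :=
  ⟨h.isPiecewiseC1.comp_add r, fun _ ht => h.mem _ ⟨sub_le_iff_le_add.1 ht.1,
    le_sub_iff_add_le.1 ht.2⟩⟩

theorem piecewise_Iic (hα : IsArcIn Ω α a s) (hβ : IsArcIn Ω β s b) (h : α s = β s) :
    IsArcIn Ω ((Iic s).piecewise α β) a b := by
  have hl : EqOn ((Iic s).piecewise α β) α (Icc a s) :=
    (piecewise_eqOn _ _ _).mono Icc_subset_Iic_self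
  have hr : EqOn ((Iic s).piecewise α β) β (Icc s b) := fun t ht =>
    piecewise_Iic_apply_of_le h ht.1
  refine ⟨(hα.isPiecewiseC1.congr hl).trans (hβ.isPiecewiseC1.congr hr), fun t ht => ?_⟩
  rcases le_total t s with hts | hst
  · exact hl ⟨ht.1, hts⟩ ▸ hα.mem t ⟨ht.1, hts⟩
  · exact hr ⟨hst, ht.2⟩ ▸ hβ.mem t ⟨hst, ht.2⟩

theorem continuousOn (h : IsArcIn Ω γ a b) : ContinuousOn γ (Icc a b) :=
  h.isPiecewiseC1.continuousOn

end IsArcIn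

theorem isArcIn_const (hz : z ∈ Ω) (hab : a ≤ b) : IsArcIn Ω (fun _ => z) a b :=
  ⟨.of_contDiffOn hab contDiffOn_const, fun _ _ => hz⟩

theorem exists_isArcIn_of_segment_subset (hab : a < b) (h : segment ℝ z w ⊆ Ω) :
    ∃ γ, IsArcIn Ω γ a b ∧ γ a = z ∧ γ b = w := by
  have hab' : b - a ≠ 0 := (sub_pos.2 hab).ne'
  refine ⟨fun t => AffineMap.lineMap z w ((t - a) / (b - a)),
    ⟨.of_contDiffOn hab.le ?_, fun t ht => h ?_⟩, ?_, ?_⟩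
  · simp only [AffineMap.lineMap_apply_module]
    fun_prop
  · rw [segment_eq_image_lineMap]
    exact mem_image_of_mem _ (unitInterval.div_mem (sub_nonneg.2 ht.1) (sub_nonneg.2 hab.le)
      (sub_le_sub_right ht.2 a))
  · simp only [sub_self, zero_div, AffineMap.lineMap_apply_zero]
  · simp only [div_self hab', AffineMap.lineMap_apply_one]

end Arcs

section Boundary

/-- The distance `δ_Ω(z)` from `z` to the boundary of `Ω`. -/
def boundaryDist {X : Type*} [PseudoMetricSpace X] (Ω : Set X) (z : X) : ℝ :=
  infDist z (frontier Ω)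

section PseudoMetricSpace

variable {X : Type*} [PseudoMetricSpace X] {Ω : Set X} {z : X}

theorem continuous_boundaryDist : Continuous (boundaryDist Ω) :=
  continuous_infDist_pt _

theorem boundaryDist_nonneg : 0 ≤ boundaryDist Ω z :=
  infDist_nonneg

theorem boundaryDist_pos (hΩ : IsOpen Ω) (hfr : (frontier Ω).Nonempty) (hz : z ∈ Ω) :
    0 < boundaryDist Ω z := by
  refine (isClosed_frontier.notMem_iff_infDist_pos hfr).1 fun hzfr => ?_
  rw [hΩ.frontier_eq] at hzfr
  exact hzfr.2 hz

end PseudoMetricSpace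

variable {E : Type*} [NormedAddCommGroup E] [NormedSpace ℝ E] {Ω : Set E} {z : E}

theorem ball_boundaryDist_subset (hΩ : IsOpen Ω) (hz : z ∈ Ω) :
    ball z (boundaryDist Ω z) ⊆ Ω := by
  rcases (ball z (boundaryDist Ω z)).eq_empty_or_nonempty with hempty | hne
  · exact hempty ▸ empty_subset Ω
  refine (convex_ball z _).isPreconnected.subset_left_of_subset_union hΩ
    isClosed_closure.isOpen_compl (disjoint_compl_right_iff_subset.2 subset_closure) ?_
    ⟨z, mem_ball_self (nonempty_ball.1 hne), hz⟩
  calc ball z (boundaryDist Ω z) ⊆ (frontier Ω)ᶜ := ball_infDist_subset_compl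
    _ = Ω ∪ (closure Ω)ᶜ := by
      rw [compl_frontier_eq_union_interior, hΩ.interior_eq, interior_compl]

theorem exists_segment_subset_boundaryDist_ne (hΩ : IsOpen Ω) (hfr : (frontier Ω).Nonempty)
    (hz : z ∈ Ω) (r : ℝ) : ∃ w, segment ℝ z w ⊆ Ω ∧ boundaryDist Ω w ≠ r := by
  have hpos := boundaryDist_pos hΩ hfr hz
  rcases ne_or_eq (boundaryDist Ω z) r with hr | rfl
  · exact ⟨z, by rwa [segment_same, singleton_subset_iff], hr⟩
  obtain ⟨q, hq, hzq⟩ : ∃ q ∈ frontier Ω, dist z q < 2 * boundaryDist Ω z :=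
    (infDist_lt_iff hfr).1 (lt_two_mul_self hpos)
  have hmid : 2⁻¹ * dist z q < boundaryDist Ω z := by linarith
  refine ⟨midpoint ℝ z q, ?_, ne_of_lt ?_⟩
  · refine ((convex_ball z _).segment_subset (mem_ball_self hpos) ?_).trans
      (ball_boundaryDist_subset hΩ hz)
    rwa [mem_ball, dist_midpoint_left, Real.norm_two]
  · calc boundaryDist Ω (midpoint ℝ z q) ≤ dist (midpoint ℝ z q) q := infDist_le_dist_of_mem hq
      _ < boundaryDist Ω z := by rwa [dist_midpoint_right, Real.norm_two]

end Boundary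

section Finsler

variable {E : Type*} [NormedAddCommGroup E] [NormedSpace ℝ E] {Ω U : Set E} {F : E → E → ℝ}
  {γ : ℝ → E} {z : E} {a b s k c ε : ℝ}

/-- The `F`-length of a curve in `Ω` parametrized by `[0, 1]` controls the variation of
`log δ_Ω / 2` between its endpoints. -/
def HasLogLowerBound (Ω : Set E) (F : E → E → ℝ) : Prop :=
  ∀ γ, IsArcIn Ω γ 0 1 →
    1 / 2 * |Real.log (boundaryDist Ω (γ 0) / boundaryDist Ω (γ 1))| ≤ finslerLength F γ 0 1

/-- The lower bound `c |X| / δ_Ω(z) ^ k` for the integrand `F` on `Ω`. -/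
def HasPowerLowerBound (Ω : Set E) (F : E → E → ℝ) (k c : ℝ) : Prop :=
  ∀ z ∈ Ω, ∀ X, c * ‖X‖ / boundaryDist Ω z ^ k ≤ F z X

/-- From every point of `Ω` start curves in `Ω`, parametrized by `[0, 1]`, of arbitrarily small
`F`-length. This is not automatic, since `F` need not vanish on zero vectors. -/
def HasShortArcs (Ω : Set E) (F : E → E → ℝ) : Prop :=
  ∀ z ∈ Ω, ∀ ε > 0, ∃ γ, IsArcIn Ω γ 0 1 ∧ γ 0 = z ∧ finslerLength F γ 0 1 < ε

theorem HasLogLowerBound.half_abs_log_le (hlog : HasLogLowerBound Ω F)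
    (hγ : IsArcIn Ω γ a (a + 1)) :
    1 / 2 * |Real.log (boundaryDist Ω (γ a) / boundaryDist Ω (γ (a + 1)))| ≤
      finslerLength F γ a (a + 1) := by
  have hγ0 : IsArcIn Ω (fun t => γ (t + a)) 0 1 := by
    simpa only [sub_self, add_sub_cancel_left] using hγ.comp_add a
  calc _ ≤ finslerLength F (fun t => γ (t + a)) 0 1 := by
        simpa only [zero_add, add_comm 1 a] using hlog _ hγ0
    _ = finslerLength F γ a (a + 1) := by
        rw [← finslerLength_comp_add_right (γ := γ) a, sub_self, add_sub_cancel_left]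

/-- If the `F`-speed is not integrable, then the `F`-length has the junk value `0`. -/
theorem intervalIntegrable_finslerSpeed_of_boundaryDist_ne (hΩ : IsOpen Ω)
    (hfr : (frontier Ω).Nonempty) (hlog : HasLogLowerBound Ω F) (hγ : IsArcIn Ω γ a (a + 1))
    (hne : boundaryDist Ω (γ a) ≠ boundaryDist Ω (γ (a + 1))) :
    IntervalIntegrable (finslerSpeed F γ) volume a (a + 1) := by
  by_contra hint
  have hlen := hlog.half_abs_log_le hγ
  rw [finslerLength, intervalIntegral.integral_undef hint] at hlen
  have ha := boundaryDist_pos hΩ hfr (hγ.mem a (left_mem_Icc.2 hγ.le))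
  have hb := boundaryDist_pos hΩ hfr (hγ.mem (a + 1) (right_mem_Icc.2 hγ.le))
  have hlog0 : Real.log (boundaryDist Ω (γ a) / boundaryDist Ω (γ (a + 1))) = 0 :=
    abs_nonpos_iff.1 (by linarith)
  exact hne ((div_eq_one_iff_eq hb.ne').1 (Real.eq_one_of_pos_of_log_eq_zero (div_pos ha hb) hlog0))

namespace IsArcIn

/-- Prolong the arc by a segment, so that its endpoints lie at different distances from the
boundary. -/
theorem intervalIntegrable_finslerSpeed_of_lt_add_one (hγ : IsArcIn Ω γ a b)
    (hb : b < a + 1) (hΩ : IsOpen Ω) (hfr : (frontier Ω).Nonempty) (hlog : HasLogLowerBound Ω F) :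
    IntervalIntegrable (finslerSpeed F γ) volume a b := by
  obtain ⟨w, hw, hne⟩ := exists_segment_subset_boundaryDist_ne hΩ hfr
    (hγ.mem b (right_mem_Icc.2 hγ.le)) (boundaryDist Ω (γ a))
  obtain ⟨σ, hσ, hσb, hσ1⟩ := exists_isArcIn_of_segment_subset hb hw
  refine ((intervalIntegrable_finslerSpeed_piecewise_iff hγ.le hσ.le).1
    (intervalIntegrable_finslerSpeed_of_boundaryDist_ne hΩ hfr hlog
      (hγ.piecewise_Iic hσ hσb.symm) ?_)).1
  rw [piecewise_eq_of_mem _ _ _ (mem_Iic.2 hγ.le),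
    piecewise_eq_of_notMem (Iic b) _ _ hb.not_ge, hσ1]
  exact hne.symm

theorem intervalIntegrable_finslerSpeed (hγ : IsArcIn Ω γ a b) (hb : b ≤ a + 1)
    (hΩ : IsOpen Ω) (hfr : (frontier Ω).Nonempty) (hlog : HasLogLowerBound Ω F) :
    IntervalIntegrable (finslerSpeed F γ) volume a b := by
  have hmid : (a + b) / 2 ∈ Icc a b := ⟨by linarith [hγ.le], by linarith [hγ.le]⟩
  have hl := (hγ.left hmid).intervalIntegrable_finslerSpeed_of_lt_add_one (by linarith) hΩ hfr hlog
  have hr := (hγ.right hmid).intervalIntegrable_finslerSpeed_of_lt_add_one (by linarith) hΩ hfr hlog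
  exact hl.trans hr

theorem finslerSpeed_nonneg (hγ : IsArcIn Ω γ a b) (hc : 0 ≤ c) (hpow : HasPowerLowerBound Ω F k c)
    (hs : s ∈ Icc a b) : 0 ≤ finslerSpeed F γ s := by
  have := boundaryDist_nonneg (Ω := Ω) (z := γ s)
  exact le_trans (by positivity) (hpow (γ s) (hγ.mem s hs) (deriv γ s))

theorem finslerLength_left_le (hγ : IsArcIn Ω γ a b) (hs : s ∈ Icc a b) (hc : 0 ≤ c)
    (hpow : HasPowerLowerBound Ω F k c)
    (hint : IntervalIntegrable (finslerSpeed F γ) volume a b) :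
    finslerLength F γ a s ≤ finslerLength F γ a b :=
  intervalIntegral.integral_mono_interval le_rfl hs.1 hs.2
    ((ae_restrict_mem measurableSet_Ioc).mono fun _ ht =>
      hγ.finslerSpeed_nonneg hc hpow (Ioc_subset_Icc_self ht)) hint

theorem norm_deriv_le (hγ : IsArcIn Ω γ a b) (hΩ : IsOpen Ω) (hfr : (frontier Ω).Nonempty)
    (hc : 0 < c) (hpow : HasPowerLowerBound Ω F k c) (hs : s ∈ Icc a b) :
    ‖deriv γ s‖ ≤ boundaryDist Ω (γ s) ^ k * finslerSpeed F γ s / c := by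
  have hδ := Real.rpow_pos_of_pos (boundaryDist_pos hΩ hfr (hγ.mem s hs)) k
  rw [le_div_iff₀' hc, ← div_le_iff₀' hδ]
  exact hpow (γ s) (hγ.mem s hs) (deriv γ s)

theorem continuousOn_boundaryDist_rpow (hγ : IsArcIn Ω γ a b) (hk : 0 ≤ k) :
    ContinuousOn (fun t => boundaryDist Ω (γ t) ^ k) (uIcc a b) := by
  rw [uIcc_of_le hγ.le]
  exact (continuous_boundaryDist.comp_continuousOn hγ.continuousOn).rpow_const fun _ _ => .inr hk

theorem intervalIntegrable_norm_deriv [CompleteSpace E] (hγ : IsArcIn Ω γ a b)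
    (hΩ : IsOpen Ω) (hfr : (frontier Ω).Nonempty) (hk : 0 ≤ k) (hc : 0 < c)
    (hpow : HasPowerLowerBound Ω F k c)
    (hint : IntervalIntegrable (finslerSpeed F γ) volume a b) :
    IntervalIntegrable (fun t => ‖deriv γ t‖) volume a b := by
  refine ((hint.continuousOn_mul (hγ.continuousOn_boundaryDist_rpow hk)).div_const c).mono_fun'
    (aestronglyMeasurable_deriv γ _).norm ((ae_restrict_mem measurableSet_uIoc).mono fun t ht => ?_)
  rw [uIoc_of_le hγ.le] at ht
  simpa only [norm_norm] using hγ.norm_deriv_le hΩ hfr hc hpow (Ioc_subset_Icc_self ht)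

theorem integral_norm_deriv_le [CompleteSpace E] (hγ : IsArcIn Ω γ a b)
    (hΩ : IsOpen Ω) (hfr : (frontier Ω).Nonempty) (hk : 0 ≤ k) (hc : 0 < c)
    (hpow : HasPowerLowerBound Ω F k c)
    (hint : IntervalIntegrable (finslerSpeed F γ) volume a b) :
    ∫ t in a..b, ‖deriv γ t‖ ≤
      (∫ t in a..b, boundaryDist Ω (γ t) ^ k * finslerSpeed F γ t) / c := by
  rw [← intervalIntegral.integral_div]
  exact intervalIntegral.integral_mono_on hγ.le
    (hγ.intervalIntegrable_norm_deriv hΩ hfr hk hc hpow hint)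
    ((hint.continuousOn_mul (hγ.continuousOn_boundaryDist_rpow hk)).div_const c)
    fun t => hγ.norm_deriv_le hΩ hfr hc hpow

theorem dist_le_of_boundaryDist_rpow_le [CompleteSpace E] (hγ : IsArcIn Ω γ a b)
    (hΩ : IsOpen Ω) (hfr : (frontier Ω).Nonempty) (hk : 0 ≤ k) (hc : 0 < c)
    (hpow : HasPowerLowerBound Ω F k c)
    (hint : IntervalIntegrable (finslerSpeed F γ) volume a b) {D : ℝ}
    (hD : ∀ t ∈ Icc a b, boundaryDist Ω (γ t) ^ k ≤ D) (hs : s ∈ Icc a b) :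
    dist (γ s) (γ a) ≤ D * finslerLength F γ a b / c := by
  have hnorm := hγ.intervalIntegrable_norm_deriv hΩ hfr hk hc hpow hint
  calc dist (γ s) (γ a) = ‖γ s - γ a‖ := dist_eq_norm _ _
    _ ≤ ∫ t in a..s, ‖deriv γ t‖ := (hγ.left hs).isPiecewiseC1.norm_sub_le
        (hnorm.mono_set (uIcc_subset_uIcc_left (Icc_subset_uIcc hs)))
    _ ≤ ∫ t in a..b, ‖deriv γ t‖ := intervalIntegral.integral_mono_interval le_rfl hs.1 hs.2
        (ae_of_all _ fun _ => norm_nonneg _) hnorm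
    _ ≤ (∫ t in a..b, boundaryDist Ω (γ t) ^ k * finslerSpeed F γ t) / c :=
        hγ.integral_norm_deriv_le hΩ hfr hk hc hpow hint
    _ ≤ (∫ t in a..b, D * finslerSpeed F γ t) / c := by
        gcongr
        exact intervalIntegral.integral_mono_on hγ.le
          (hint.continuousOn_mul (hγ.continuousOn_boundaryDist_rpow hk)) (hint.const_mul _)
          fun t ht => mul_le_mul_of_nonneg_right (hD t ht) (hγ.finslerSpeed_nonneg hc.le hpow ht)
    _ = D * finslerLength F γ a b / c := by
        rw [intervalIntegral.integral_const_mul, finslerLength]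

/-- As `δ_Ω ≤ δ_Ω(γ a) + R` on a curve of radius `R` about `γ a`, the power lower bound yields an
upper bound for `R` in terms of `R` itself, which can be solved for `R` if the `F`-length is
small. -/
theorem dist_le_of_finslerLength_le [CompleteSpace E] (hγ : IsArcIn Ω γ a b)
    (hΩ : IsOpen Ω) (hfr : (frontier Ω).Nonempty) (hk : 0 ≤ k) (hk1 : k ≤ 1) (hc : 0 < c)
    (hpow : HasPowerLowerBound Ω F k c)
    (hint : IntervalIntegrable (finslerSpeed F γ) volume a b)
    (hshort : finslerLength F γ a b ≤ c / 2) (hs : s ∈ Icc a b) :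
    dist (γ s) (γ a) ≤ 2 * (1 + boundaryDist Ω (γ a)) / c * finslerLength F γ a b := by
  have hcont : ContinuousOn (fun t => dist (γ t) (γ a)) (Icc a b) := by
    have := hγ.continuousOn
    fun_prop
  obtain ⟨u, hu, hmax⟩ := isCompact_Icc.exists_isMaxOn ⟨s, hs⟩ hcont
  rw [isMaxOn_iff] at hmax
  set R := dist (γ u) (γ a)
  have hδ (t : ℝ) (ht : t ∈ Icc a b) :
      boundaryDist Ω (γ t) ^ k ≤ 1 + boundaryDist Ω (γ a) + R := by
    have hδ0 : 0 ≤ boundaryDist Ω (γ t) := boundaryDist_nonneg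
    have hδa : boundaryDist Ω (γ t) ≤ boundaryDist Ω (γ a) + dist (γ t) (γ a) :=
      infDist_le_infDist_add_dist
    calc boundaryDist Ω (γ t) ^ k ≤ (1 + boundaryDist Ω (γ t)) ^ k := by
          gcongr
          linarith
      _ ≤ 1 + boundaryDist Ω (γ t) := Real.rpow_le_self_of_one_le (by linarith) hk1
      _ ≤ 1 + boundaryDist Ω (γ a) + R := by linarith [hmax t ht]
  have hR : R ≤ (1 + boundaryDist Ω (γ a) + R) * finslerLength F γ a b / c :=
    hγ.dist_le_of_boundaryDist_rpow_le hΩ hfr hk hc hpow hint hδ hu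
  calc dist (γ s) (γ a) ≤ R := hmax s hs
    _ ≤ 2 * (1 + boundaryDist Ω (γ a)) / c * finslerLength F γ a b := by
      rw [le_div_iff₀ hc] at hR
      rw [div_mul_eq_mul_div, le_div_iff₀ hc]
      nlinarith [dist_nonneg (x := γ u) (y := γ a)]

end IsArcIn

namespace HasShortArcs

theorem exists_isArcIn (hshort : HasShortArcs Ω F) (hz : z ∈ Ω) (hε : 0 < ε) (a : ℝ) :
    ∃ γ, IsArcIn Ω γ a (a + 1) ∧ γ a = z ∧ finslerLength F γ a (a + 1) < ε := by
  obtain ⟨γ, hγ, hγ0, hγε⟩ := hshort z hz ε hε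
  refine ⟨fun t => γ (t + -a), ?_, ?_, ?_⟩
  · simpa only [sub_neg_eq_add, zero_add, add_comm 1 a] using hγ.comp_add (-a)
  · simpa only [add_neg_cancel] using hγ0
  · rw [← finslerLength_comp_add_right (γ := γ) (-a)] at hγε
    simpa only [sub_neg_eq_add, zero_add, add_comm 1 a] using hγε

theorem exists_isArcIn_forall_mem [CompleteSpace E] (hshort : HasShortArcs Ω F)
    (hΩ : IsOpen Ω) (hfr : (frontier Ω).Nonempty) (hlog : HasLogLowerBound Ω F) (hk : 0 ≤ k)
    (hk1 : k ≤ 1) (hc : 0 < c) (hpow : HasPowerLowerBound Ω F k c) (hz : z ∈ Ω) (hU : U ∈ nhds z)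
    (hε : 0 < ε) (a : ℝ) :
    ∃ γ, IsArcIn Ω γ a (a + 1) ∧ γ a = z ∧ finslerLength F γ a (a + 1) < ε ∧
      ∀ t ∈ Icc a (a + 1), γ t ∈ U := by
  obtain ⟨r, hr, hrU⟩ := Metric.mem_nhds_iff.1 hU
  set K := 2 * (1 + boundaryDist Ω z) / c with hK
  have hK0 : 0 < K := by
    have := boundaryDist_nonneg (Ω := Ω) (z := z)
    positivity
  obtain ⟨γ, hγ, rfl, hlen⟩ :=
    hshort.exists_isArcIn hz (lt_min hε (lt_min (half_pos hc) (div_pos hr hK0))) a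
  rw [lt_min_iff, lt_min_iff, lt_div_iff₀' hK0] at hlen
  refine ⟨γ, hγ, rfl, hlen.1, fun t ht => hrU ?_⟩
  exact (hγ.dist_le_of_finslerLength_le hΩ hfr hk hk1 hc hpow
    (hγ.intervalIntegrable_finslerSpeed le_rfl hΩ hfr hlog) hlen.2.1.le ht).trans_lt hlen.2.2

end HasShortArcs

/-- The bound is available on unit intervals only, and `F` need not be homogeneous, so that the arc
cannot be reparametrized: instead, prolong it by a curve which stays close to its endpoint. -/
theorem IsArcIn.half_abs_log_le [CompleteSpace E] (hγ : IsArcIn Ω γ a b) (hb : b ≤ a + 1)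
    (hΩ : IsOpen Ω) (hfr : (frontier Ω).Nonempty) (hlog : HasLogLowerBound Ω F)
    (hshort : HasShortArcs Ω F) (hk : 0 ≤ k) (hk1 : k ≤ 1) (hc : 0 < c)
    (hpow : HasPowerLowerBound Ω F k c) :
    1 / 2 * |Real.log (boundaryDist Ω (γ a) / boundaryDist Ω (γ b))| ≤ finslerLength F γ a b := by
  set f : E → ℝ := fun w => 1 / 2 * |Real.log (boundaryDist Ω (γ a) / boundaryDist Ω w)|
  have ha0 := boundaryDist_pos hΩ hfr (hγ.mem a (left_mem_Icc.2 hγ.le))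
  have hbΩ := hγ.mem b (right_mem_Icc.2 hγ.le)
  have hb0 := boundaryDist_pos hΩ hfr hbΩ
  have hfc : ContinuousAt f (γ b) :=
    continuousAt_const.mul ((continuousAt_const.div continuous_boundaryDist.continuousAt
      hb0.ne').log (div_pos ha0 hb0).ne').abs
  refine le_of_forall_pos_lt_add fun ε hε => ?_
  obtain ⟨η, hη, hηb, hηε, hηU⟩ := hshort.exists_isArcIn_forall_mem hΩ hfr hlog hk hk1 hc hpow hbΩ
    (hfc.eventually_const_lt (sub_lt_self (f (γ b)) (half_pos hε))) (half_pos hε) b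
  have hb1 : a + 1 ∈ Icc b (b + 1) := ⟨hb, by linarith [hγ.le]⟩
  have hσ := hγ.piecewise_Iic (hη.left hb1) hηb.symm
  have hσlog := hlog.half_abs_log_le hσ
  rw [piecewise_eq_of_mem _ _ _ (mem_Iic.2 hγ.le), piecewise_Iic_apply_of_le hηb.symm hb,
    finslerLength_piecewise hγ.le hb (hσ.intervalIntegrable_finslerSpeed le_rfl hΩ hfr hlog)]
    at hσlog
  calc f (γ b) < f (η (a + 1)) + ε / 2 := sub_lt_iff_lt_add.1 (hηU (a + 1) hb1)
    _ ≤ finslerLength F γ a b + finslerLength F η b (a + 1) + ε / 2 := by gcongr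
    _ ≤ finslerLength F γ a b + finslerLength F η b (b + 1) + ε / 2 := by
      gcongr
      exact hη.finslerLength_left_le hb1 hc.le hpow
        (hη.intervalIntegrable_finslerSpeed le_rfl hΩ hfr hlog)
    _ < finslerLength F γ a b + ε := by linarith

end Finsler

section GehringHayman

variable {E : Type*} [NormedAddCommGroup E] [NormedSpace ℝ E] [CompleteSpace E] {Ω : Set E}
  {F : E → E → ℝ} {γ : ℝ → E} {k c A : ℝ}

theorem IsArcIn.integral_boundaryDist_rpow_mul_le {a b : ℝ} (hγ : IsArcIn Ω γ a b)
    (hb : b ≤ a + 1) (hΩ : IsOpen Ω) (hfr : (frontier Ω).Nonempty) (hlog : HasLogLowerBound Ω F)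
    (hshort : HasShortArcs Ω F) (hk : 0 < k) (hk1 : k ≤ 1) (hc : 0 < c)
    (hpow : HasPowerLowerBound Ω F k c) :
    ∫ t in a..b, boundaryDist Ω (γ t) ^ k * finslerSpeed F γ t ≤
      (√(boundaryDist Ω (γ a) * boundaryDist Ω (γ b)) * Real.exp (finslerLength F γ a b)) ^ k *
        min (Real.pi / (2 * k)) (finslerLength F γ a b) := by
  have hpos (t : ℝ) (ht : t ∈ Icc a b) : 0 < boundaryDist Ω (γ t) :=
    boundaryDist_pos hΩ hfr (hγ.mem t ht)
  have ha := hpos a (left_mem_Icc.2 hγ.le)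
  have hb' := hpos b (right_mem_Icc.2 hγ.le)
  refine integral_rpow_mul_le_of_le_exp hγ.le ha hb' hk
    (hγ.intervalIntegrable_finslerSpeed hb hΩ hfr hlog)
    (fun t => hγ.finslerSpeed_nonneg hc.le hpow)
    (continuous_boundaryDist.comp_continuousOn hγ.continuousOn) (fun t ht => (hpos t ht).le)
    (fun t ht => le_mul_exp_of_abs_log_div_le (hpos t ht) ha ?_)
    (fun t ht => le_mul_exp_of_abs_log_div_le (hpos t ht) hb' ?_)
  · rw [← abs_neg, ← Real.log_inv, inv_div]
    exact (hγ.left ht).half_abs_log_le (ht.2.trans hb) hΩ hfr hlog hshort hk.le hk1 hc hpow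
  · exact (hγ.right ht).half_abs_log_le (by linarith [ht.1]) hΩ hfr hlog hshort hk.le hk1 hc hpow

theorem statement11_general (hΩ : IsOpen Ω) (hfr : (frontier Ω).Nonempty) (hk : 0 < k)
    (hk1 : k ≤ 1) (hc : 0 < c) (hA : 0 ≤ A) (hpow : HasPowerLowerBound Ω F k c)
    (hlog : HasLogLowerBound Ω F) (hshort : HasShortArcs Ω F) (hγ : IsArcIn Ω γ 0 1)
    (hlen : finslerLength F γ 0 1 ≤ Real.log
      (1 + A * dist (γ 0) (γ 1) / √(boundaryDist Ω (γ 0) * boundaryDist Ω (γ 1)))) :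
    ∫ t in (0 : ℝ)..1, ‖deriv γ t‖ ≤
      (1 + A) ^ k * max A (Real.pi / (2 * k)) / c * dist (γ 0) (γ 1) ^ k := by
  have hgeom : 0 < √(boundaryDist Ω (γ 0) * boundaryDist Ω (γ 1)) := Real.sqrt_pos.2 <|
    mul_pos (boundaryDist_pos hΩ hfr (hγ.mem 0 unitInterval.zero_mem))
      (boundaryDist_pos hΩ hfr (hγ.mem 1 unitInterval.one_mem))
  have h01 : (1 : ℝ) ≤ 0 + 1 := (zero_add 1).ge
  calc ∫ t in (0 : ℝ)..1, ‖deriv γ t‖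
      ≤ (∫ t in (0 : ℝ)..1, boundaryDist Ω (γ t) ^ k * finslerSpeed F γ t) / c :=
        hγ.integral_norm_deriv_le hΩ hfr hk.le hc hpow
          (hγ.intervalIntegrable_finslerSpeed h01 hΩ hfr hlog)
    _ ≤ (1 + A) ^ k * max A (Real.pi / (2 * k)) * dist (γ 0) (γ 1) ^ k / c := by
        gcongr
        exact (hγ.integral_boundaryDist_rpow_mul_le h01 hΩ hfr hlog hshort hk hk1 hc hpow).trans
          (rpow_mul_min_le hgeom dist_nonneg hA hk.le hk1 hlen)
    _ = _ := by rw [div_mul_eq_mul_div]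

end GehringHayman

section ComplexSpace

variable {n : ℕ} {Ω : Set (EuclideanSpace ℂ (Fin n))}
  {F : EuclideanSpace ℂ (Fin n) → EuclideanSpace ℂ (Fin n) → ℝ}
  {γ : ℝ → EuclideanSpace ℂ (Fin n)} {x y : EuclideanSpace ℂ (Fin n)} {a b : ℝ}

theorem piecewiseC1On_iff_isPiecewiseC1 : PiecewiseC1On γ a b ↔ IsPiecewiseC1 γ a b := by
  constructor
  · rintro ⟨-, k, t, ht, rfl, rfl, hd⟩
    suffices h : ∀ i, IsPiecewiseC1 γ (t 0) (t i) from h _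
    intro i
    induction i using Fin.induction with
    | zero => exact .refl
    | succ i ih => exact .tail ih ⟨ht i.castSucc_lt_succ, hd i⟩
  · intro h
    obtain ⟨p, hp⟩ : ∃ p : RelSeries {(s, t) : ℝ × ℝ | s < t ∧ ContDiffOn ℝ 1 γ (Icc s t)},
        p.head = a ∧ p.last = b := by
      induction h with
      | refl => exact ⟨.singleton _ a, rfl, rfl⟩
      | @tail b c _ hd ih =>
        obtain ⟨p, rfl, rfl⟩ := ih
        exact ⟨p.snoc c hd, p.head_snoc c hd, p.last_snoc c hd⟩
    exact ⟨h.continuousOn, p.length, p, Fin.strictMono_iff_lt_succ.2 fun i => (p.step i).1,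
      hp.1, hp.2, fun i => (p.step i).2⟩

theorem isCurveIn_iff : IsCurveIn Ω x y γ ↔ IsArcIn Ω γ 0 1 ∧ γ 0 = x ∧ γ 1 = y := by
  rw [IsCurveIn, piecewiseC1On_iff_isPiecewiseC1, ← and_assoc]
  exact and_congr_left' ⟨fun h => ⟨h.1, h.2⟩, fun h => ⟨h.1, h.2⟩⟩

theorem eLength_of_subsingleton [Subsingleton (EuclideanSpace ℂ (Fin n))] : eLength γ a b = 0 := by
  simp only [eLength, Subsingleton.elim (deriv γ _) 0, norm_zero, intervalIntegral.integral_zero]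

theorem hasLogLowerBound_of_isCurveIn
    (hloglow : ∀ (σ : ℝ → EuclideanSpace ℂ (Fin n)) (x y : EuclideanSpace ℂ (Fin n)),
      IsCurveIn Ω x y σ → Flength F σ 0 1 ≥ (1 / 2) * |Real.log (bdist Ω x / bdist Ω y)|) :
    HasLogLowerBound Ω F := fun γ hγ =>
  hloglow γ (γ 0) (γ 1) (isCurveIn_iff.2 ⟨hγ, rfl, rfl⟩)

theorem hasShortArcs_of_dF_self_nonpos (h : ∀ z ∈ Ω, dF Ω F z z ≤ 0) : HasShortArcs Ω F := by
  intro z hz ε hε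
  have hne : {L | ∃ γ, IsCurveIn Ω z z γ ∧ L = Flength F γ 0 1}.Nonempty :=
    ⟨_, _, isCurveIn_iff.2 ⟨isArcIn_const hz zero_le_one, rfl, rfl⟩, rfl⟩
  obtain ⟨_, ⟨γ, hγ, rfl⟩, hγε⟩ := exists_lt_of_csInf_lt hne ((h z hz).trans_lt hε)
  obtain ⟨hγΩ, hγ0, -⟩ := isCurveIn_iff.1 hγ
  exact ⟨γ, hγΩ, hγ0, hγε⟩

end ComplexSpace

theorem frontier_nonempty_of_isBounded {E : Type*} [NormedAddCommGroup E] [NormedSpace ℝ E]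
    [Nontrivial E] {Ω : Set E} (hΩ : IsBounded Ω) (hne : Ω.Nonempty) : (frontier Ω).Nonempty :=
  nonempty_frontier_iff.2 ⟨hne, fun h => NormedSpace.unbounded_univ ℝ E (h ▸ hΩ)⟩

/-- Gehring–Hayman theorem, first part of Theorem 1.6, abstract form.
If `F(z,X) ≥ c|X|/δ(z)^{1/m}`, every piecewise `C¹` curve `σ` in `Ω` has
`F-length(σ) ≥ (1/2)|log(δ(σ(0))/δ(σ(1)))|`, and
`d_F(x,y) ≤ log(1 + A|x−y|/√(δ(x)δ(y)))`, then every `F`-geodesic `γ` from `x` to `y`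
satisfies `L(γ) ≤ C|x−y|^{1/m}`. -/
theorem statement11 {n : ℕ} (Ω : Set (EuclideanSpace ℂ (Fin n)))
    (hΩo : IsOpen Ω) (hΩc : IsConnected Ω) (hΩb : IsBounded Ω)
    (m : ℝ) (hm : 1 < m)
    (F : EuclideanSpace ℂ (Fin n) → EuclideanSpace ℂ (Fin n) → ℝ)
    (hFmeas : Measurable fun p : EuclideanSpace ℂ (Fin n) × EuclideanSpace ℂ (Fin n) =>
      F p.1 p.2)
    (hFnn : ∀ z ∈ Ω, ∀ X, 0 ≤ F z X)
    (c A : ℝ) (hc : 0 < c) (hA : 0 < A)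
    (hFlow : ∀ z ∈ Ω, ∀ X : EuclideanSpace ℂ (Fin n),
      F z X ≥ c * ‖X‖ / bdist Ω z ^ (1 / m))
    (hloglow : ∀ (σ : ℝ → EuclideanSpace ℂ (Fin n)) (x y : EuclideanSpace ℂ (Fin n)),
      IsCurveIn Ω x y σ →
      Flength F σ 0 1 ≥ (1 / 2) * |Real.log (bdist Ω x / bdist Ω y)|)
    (hup : ∀ x ∈ Ω, ∀ y ∈ Ω,
      dF Ω F x y ≤ Real.log (1 + A * dist x y / Real.sqrt (bdist Ω x * bdist Ω y))) :
    ∃ C > 0, ∀ (γ : ℝ → EuclideanSpace ℂ (Fin n)) (x y : EuclideanSpace ℂ (Fin n)),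
      IsCurveIn Ω x y γ → Flength F γ 0 1 = dF Ω F x y →
      eLength γ 0 1 ≤ C * dist x y ^ (1 / m) := by
  have hm0 : 0 < 1 / m := by positivity
  refine ⟨(1 + A) ^ (1 / m) * max A (Real.pi / (2 * (1 / m))) / c, by positivity,
    fun γ x y hγ hgeod => ?_⟩
  obtain ⟨hγΩ, rfl, rfl⟩ := isCurveIn_iff.1 hγ
  rcases subsingleton_or_nontrivial (EuclideanSpace ℂ (Fin n)) with hn | hn
  · rw [eLength_of_subsingleton]
    positivity
  have hshort : HasShortArcs Ω F := hasShortArcs_of_dF_self_nonpos fun z hz => by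
    simpa only [dist_self, mul_zero, zero_div, add_zero, Real.log_one] using hup z hz z hz
  exact statement11_general hΩo (frontier_nonempty_of_isBounded hΩb hΩc.nonempty) hm0
    ((div_le_one (by positivity)).2 hm.le) hc hA.le hFlow (hasLogLowerBound_of_isCurveIn hloglow)
    hshort hγΩ (hgeod.trans_le (hup _ (hγΩ.mem 0 unitInterval.zero_mem) _
      (hγΩ.mem 1 unitInterval.one_mem)))
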